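/- Let Â = A + εB be an n×n dual matrix and let Ĝ = G + εR be a dual matrix with real n×n matrices G and R. Then Ĝ is a dual core generalized inverse of Â (i.e. ÂĜÂ = Â, ÂĜ² = Ĝ, (ÂĜ)^T = ÂĜ) if and only if G is a core inverse of A (AGA = A, AG² = G, (AG)^T = AG) and the following three real matrix equations hold: BGA + ARA + AGB = B; AGR + ARG + BG² = R; (AR + BG)^T = AR + BG. -/

import Mathlib

open Matrix

/-- The dual matrix `A + εB`, viewed as a matrix over the dual numbers `ℝ[ε]`. -/
def dm {n : ℕ} (A B : Matrix (Fin n) (Fin n) ℝ) :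
    Matrix (Fin n) (Fin n) (DualNumber ℝ) :=
  fun i j => TrivSqZeroExt.inl (A i j) + TrivSqZeroExt.inr (B i j)

/-- A dual matrix has dual index one iff its column space equals that of its square,
equivalently (as shown in the paper) there is a dual matrix `X` with `M² * X = M`. -/
def DualIndexOne {n : ℕ} (M : Matrix (Fin n) (Fin n) (DualNumber ℝ)) : Prop :=
  ∃ X : Matrix (Fin n) (Fin n) (DualNumber ℝ), M * M * X = M

/-- `G` is a group inverse of the real matrix `A`. -/
def IsGroupInv {n : ℕ} (A G : Matrix (Fin n) (Fin n) ℝ) : Prop :=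
  A * G * A = A ∧ G * A * G = G ∧ A * G = G * A

/-- `X` is the Moore–Penrose inverse of the real matrix `A`. -/
def IsMoorePenrose {n : ℕ} (A X : Matrix (Fin n) (Fin n) ℝ) : Prop :=
  A * X * A = A ∧ X * A * X = X ∧ (A * X)ᵀ = A * X ∧ (X * A)ᵀ = X * A

/-- `C` is a core inverse of the real matrix `A`. -/
def IsCoreInv {n : ℕ} (A C : Matrix (Fin n) (Fin n) ℝ) : Prop :=
  A * C * A = A ∧ A * (C * C) = C ∧ (A * C)ᵀ = A * C

/-- `G` is a dual group generalized inverse (DGGI) of the dual matrix `M`. -/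
def IsDGGI {n : ℕ} (M G : Matrix (Fin n) (Fin n) (DualNumber ℝ)) : Prop :=
  M * G * M = M ∧ G * M * G = G ∧ M * G = G * M

/-- `X` is a dual Moore–Penrose generalized inverse (DMPGI) of the dual matrix `M`. -/
def IsDMPGI {n : ℕ} (M X : Matrix (Fin n) (Fin n) (DualNumber ℝ)) : Prop :=
  M * X * M = M ∧ X * M * X = X ∧ (M * X)ᵀ = M * X ∧ (X * M)ᵀ = X * M

/-- `G` is a dual core generalized inverse (DCGI) of the dual matrix `M`. -/
def IsDCGI {n : ℕ} (M G : Matrix (Fin n) (Fin n) (DualNumber ℝ)) : Prop :=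
  M * G * M = M ∧ M * (G * G) = G ∧ (M * G)ᵀ = M * G

theorem dm_mul {n : ℕ} (A B C D : Matrix (Fin n) (Fin n) ℝ) :
    dm A B * dm C D = dm (A * C) (A * D + B * C) := by
  ext i j
  · simp [dm, Matrix.mul_apply, TrivSqZeroExt.fst_sum]
  · simp [dm, Matrix.mul_apply, TrivSqZeroExt.snd_sum, Finset.sum_add_distrib, mul_comm]

theorem dm_transpose {n : ℕ} (A B : Matrix (Fin n) (Fin n) ℝ) :
    (dm A B)ᵀ = dm Aᵀ Bᵀ := rfl

theorem dm_inj {n : ℕ} (A B C D : Matrix (Fin n) (Fin n) ℝ) :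
    dm A B = dm C D ↔ A = C ∧ B = D := by
  constructor
  · intro h
    constructor
    · ext i j
      simpa [dm] using congrArg TrivSqZeroExt.fst (congrFun (congrFun h i) j)
    · ext i j
      simpa [dm] using congrArg TrivSqZeroExt.snd (congrFun (congrFun h i) j)
  · rintro ⟨rfl, rfl⟩
    rfl

theorem stmt7 {n : ℕ} (A B G R : Matrix (Fin n) (Fin n) ℝ) :
    IsDCGI (dm A B) (dm G R) ↔
      IsCoreInv A G ∧
        B * G * A + A * R * A + A * G * B = B ∧
        A * G * R + A * R * G + B * (G * G) = R ∧
        (A * R + B * G)ᵀ = A * R + B * G := by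
  have e1 : A * G * B + (A * R + B * G) * A = B * G * A + A * R * A + A * G * B := by
    noncomm_ring
  have e2 : A * (G * R + R * G) + B * (G * G) = A * G * R + A * R * G + B * (G * G) := by
    noncomm_ring
  unfold IsDCGI IsCoreInv
  simp only [dm_mul, dm_transpose, dm_inj, e1, e2]
  tauto
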